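/- arXiv:1306.2669 — 3 statements merged into one kernel-verified Lean document; each statement's English description precedes it below -/
import Mathlib

section
/- Let L be a perfect field of characteristic p > 0 and let M be a function field over constant field L (so L is algebraically closed in M). Let t ∈ M be such that M/L(t) is a finite separable extension of degree n. Let m be a positive integer, let v ∈ M, and let b_0 = 0, b_1, …, b_n be pairwise distinct elements of L with v + b_i ≠ 0 for all i. Assume that for each i = 0, …, n: (a) for every prime w of M, p^m divides w(v + b_i); and (b) every prime w of M with w(v + b_i) ≠ 0 is unramified over L(t). Then v is a p^m-th power of an element of M. -/
/-- A prime of a function field `M` over a constant field `F`: a surjective additive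
valuation `M → ℤ` that is trivial on `F`. -/
structure FFPrime (F M : Type*) [Field F] [Field M] [Algebra F M] where
  v : M → ℤ
  map_mul : ∀ x y : M, x ≠ 0 → y ≠ 0 → v (x * y) = v x + v y
  add_min : ∀ x y : M, x ≠ 0 → y ≠ 0 → x + y ≠ 0 → min (v x) (v y) ≤ v (x + y)
  surj : ∀ n : ℤ, ∃ x : M, x ≠ 0 ∧ v x = n
  triv : ∀ c : F, c ≠ 0 → v (algebraMap F M c) = 0

/-- A prime of `M` is unramified over `F(t)` if some nonzero element of `F(t)` has
valuation `1`. -/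
def FFPrime.UnramifiedOver {F M : Type*} [Field F] [Field M] [Algebra F M]
    (P : FFPrime F M) (t : M) : Prop :=
  ∃ r : M, r ∈ IntermediateField.adjoin F {t} ∧ r ≠ 0 ∧ P.v r = 1

/-!
Put `K = L(t)`, `q = p ^ m`, and let `f` be the minimal polynomial of `z` over `K`, so that
`f(-b) = N(-b - z)` for the norm `N` of `K(z)/K`. Since the divisor of `z + b` is supported at
unramified primes, it is a `q`-th power not only in `M` but already in `K(z)`. Hence `f(-b)` is a
`q`-th power up to a unit of `L[t]`; such a unit is a constant, and so is itself a `q`-th power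
because `L` is perfect. As the points `-b` are `q`-th powers too, and there are more of them than
the degree of `f`, Lagrange interpolation shows that the coefficients of `f` are `q`-th powers.
Extracting their roots gives a separable polynomial that vanishes at `z ^ (1 / q)`. The latter is
therefore both separable and purely inseparable over `M`, i.e. it lies in `M`.
-/

open IsDedekindDomain HeightOneSpectrum WithZero Polynomial

section Norm

theorem exists_ideal_eq_pow_of_dvd_multiplicity {R : Type*} [CommRing R] [IsDedekindDomain R]
    {q : ℕ} {I : Ideal R} (hI : I ≠ ⊥)
    (h : ∀ P : HeightOneSpectrum R, q ∣ multiplicity P.asIdeal I) :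
    ∃ J : Ideal R, I = J ^ q := by
  classical
  have hcount (𝔭 : Associates (Ideal R)) (h𝔭 : Irreducible 𝔭) :
      q ∣ 𝔭.count (Associates.mk I).factors := by
    obtain ⟨P, rfl⟩ := Associates.mk_surjective 𝔭
    have hP : Irreducible P := Associates.irreducible_mk.1 h𝔭
    rw [Ideal.count_associates_factors_eq hI (Ideal.isPrime_of_prime hP.prime) hP.ne_zero,
      ← normalize_eq P, ← UniqueFactorizationMonoid.multiplicity_eq_count_normalizedFactors hP hI]
    exact h ⟨P, Ideal.isPrime_of_prime hP.prime, hP.ne_zero⟩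
  obtain ⟨J, hJ⟩ := Associates.is_pow_of_dvd_count (Associates.mk_ne_zero.2 hI) hcount
  obtain ⟨J, rfl⟩ := Associates.mk_surjective J
  exact ⟨J, Associates.mk_injective (hJ.trans (Associates.mk_pow J q).symm)⟩

variable {A B : Type*} [CommRing A] [CommRing B]

theorem exists_intNorm_eq_unit_mul_pow [IsDomain A] [IsPrincipalIdealRing A] [IsDedekindDomain B]
    [Algebra A B] [Module.Finite A B] [Module.IsTorsionFree A B] {q : ℕ} {b : B} {J : Ideal B}
    (hb : Ideal.span {b} = J ^ q) :
    ∃ (u : Aˣ) (g : A), Algebra.intNorm A B b = u * g ^ q := by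
  obtain ⟨g, hg⟩ := (IsPrincipalIdealRing.principal (Ideal.relNorm A J)).principal
  have hnorm : Ideal.span {Algebra.intNorm A B b} = Ideal.span {g ^ q} := by
    rw [← Ideal.relNorm_singleton, hb, map_pow, hg, Ideal.submodule_span_eq,
      Ideal.span_singleton_pow]
  obtain ⟨u, hu⟩ := (Ideal.span_singleton_eq_span_singleton.1 hnorm).symm
  exact ⟨u, g, by rw [← hu, mul_comm]⟩

variable {F : Type*} [Field F] [Algebra A F] [Algebra B F]

theorem exists_algebraMap_eq_pow_mul [IsIntegralClosure B A F] {q : ℕ} (hq : q ≠ 0) {x : F}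
    (hx : IsAlgebraic A x) :
    ∃ a : A, a ≠ 0 ∧ ∃ b : B, algebraMap B F b = algebraMap A F a ^ q * x := by
  obtain ⟨a, ha, hax⟩ := hx.exists_integral_multiple
  have hint : IsIntegral A (algebraMap A F a ^ q * x) := by
    rw [← Nat.sub_one_add_one hq, pow_succ, mul_assoc, ← Algebra.smul_def]
    exact (isIntegral_algebraMap.pow _).mul hax
  exact ⟨a, ha, IsIntegralClosure.isIntegral_iff.1 hint⟩

theorem exists_norm_eq_unit_mul_pow_of_dvd_log_valuation [IsDomain A]
    [IsPrincipalIdealRing A] [IsDedekindDomain B] {K : Type*} [Field K] [Algebra A K]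
    [IsFractionRing A K] [Algebra K F] [FiniteDimensional K F] [Algebra.IsSeparable K F]
    [Algebra A B] [IsScalarTower A K F] [IsScalarTower A B F] [IsIntegralClosure B A F]
    [IsFractionRing B F] {q : ℕ} (hq : q ≠ 0) {x : F} (hx : x ≠ 0)
    (h : ∀ P : HeightOneSpectrum B, (q : ℤ) ∣ log (P.valuation F x)) :
    ∃ (u : Aˣ) (r : K), Algebra.norm K x = algebraMap A K u * r ^ q := by
  have : FaithfulSMul A F := .trans A K F
  have : FaithfulSMul A B := .tower_bot A B F
  have : Module.Finite A B := IsIntegralClosure.finite A K F B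
  have halg : IsAlgebraic A x :=
    (IsFractionRing.isAlgebraic_iff A K F).2 (Algebra.IsAlgebraic.isAlgebraic x)
  obtain ⟨a, ha, b, hb⟩ := exists_algebraMap_eq_pow_mul (B := B) hq halg
  have haF : algebraMap A F a ≠ 0 := by simpa using ha
  have haK : algebraMap A K a ≠ 0 := by simpa using ha
  have hb0 : b ≠ 0 := by
    rintro rfl
    exact mul_ne_zero (pow_ne_zero q haF) hx (by rw [← hb, map_zero])
  have hmult (P : HeightOneSpectrum B) : q ∣ multiplicity P.asIdeal (Ideal.span {b}) := by
    have hval : -(multiplicity P.asIdeal (Ideal.span {b}) : ℤ) =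
        q * log (P.valuation F (algebraMap A F a)) + log (P.valuation F x) := by
      rw [← nsmul_eq_mul, ← log_pow, ← log_mul (pow_ne_zero q (by simpa using haF))
        (by simpa using hx), ← map_pow, ← map_mul, ← hb, P.valuation_of_algebraMap,
        P.intValuation_eq_exp_neg_multiplicity hb0, log_exp]
    rw [← Int.natCast_dvd_natCast, ← dvd_neg, hval]
    exact dvd_add (dvd_mul_right _ _) (h P)
  obtain ⟨J, hJ⟩ := exists_ideal_eq_pow_of_dvd_multiplicity (by simpa using hb0) hmult
  obtain ⟨u, g, hg⟩ := exists_intNorm_eq_unit_mul_pow (A := A) hJ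
  have hnorm : algebraMap A K u * algebraMap A K g ^ q =
      (algebraMap A K a ^ Module.finrank K F) ^ q * Algebra.norm K x := by
    rw [← map_pow, ← map_mul, ← hg, Algebra.algebraMap_intNorm (L := F), hb, map_mul, map_pow,
      IsScalarTower.algebraMap_apply A K F, Algebra.norm_algebraMap]
  refine ⟨u, algebraMap A K g / algebraMap A K a ^ Module.finrank K F, ?_⟩
  rw [div_pow, mul_div_assoc', hnorm, mul_div_cancel_left₀ _ (by simp [haK])]

end Norm

namespace FFPrime

theorem map_neg {F M : Type*} [Field F] [Field M] [Algebra F M] (P : FFPrime F M) {x : M}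
    (hx : x ≠ 0) : P.v (-x) = P.v x := by
  have hneg : P.v (-1) = 0 := by simpa using P.triv (-1) (by simp)
  rw [neg_eq_neg_one_mul, P.map_mul _ _ (by simp) hx, hneg, zero_add]

/-- The prime of `F` attached to a maximal ideal of a Dedekind domain `B` with fraction field `F`
that contains the constants; its valuation is the `P`-adic one, written additively. -/
noncomputable def ofHeightOneSpectrum (L F : Type*) {B : Type*} [Field L] [Field F]
    [Algebra L F] [CommRing B] [IsDedekindDomain B] [Algebra L B] [Algebra B F]
    [IsScalarTower L B F] [IsFractionRing B F] (P : HeightOneSpectrum B) : FFPrime L F where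
  v x := -log (P.valuation F x)
  map_mul x y hx hy := by
    rw [Valuation.map_mul, log_mul (by simpa using hx) (by simpa using hy), neg_add]
  add_min x y hx hy hxy := by
    have hx' : P.valuation F x ≠ 0 := by simpa using hx
    have hy' : P.valuation F y ≠ 0 := by simpa using hy
    have hxy' : P.valuation F (x + y) ≠ 0 := by simpa using hxy
    rcases le_max_iff.1 ((P.valuation F).map_add x y) with h | h
    · exact (min_le_left _ _).trans (neg_le_neg ((log_le_log hxy' hx').2 h))
    · exact (min_le_right _ _).trans (neg_le_neg ((log_le_log hxy' hy').2 h))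
  surj n := by
    obtain ⟨x, hx⟩ := P.valuation_surjective F (exp (-n))
    refine ⟨x, ?_, by rw [hx, log_exp, neg_neg]⟩
    rintro rfl
    exact exp_ne_zero (hx.symm.trans (map_zero _))
  triv c hc := by
    have hu : IsUnit (algebraMap L B c) := (IsUnit.mk0 c hc).map (algebraMap L B)
    have hval : P.valuation F (algebraMap L F c) = 1 := by
      rw [IsScalarTower.algebraMap_apply L B F, valuation_eq_one_iff_notMem]
      exact fun hmem => P.isPrime.ne_top (Ideal.eq_top_of_isUnit_mem _ hmem hu)
    rw [hval, log_one, neg_zero]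

theorem exists_over_ofHeightOneSpectrum {L F M B : Type*} [Field L] [Field F] [Field M]
    [Algebra L F] [Algebra L M] [Algebra F M] [IsScalarTower L F M] [FiniteDimensional F M]
    [Algebra.IsSeparable F M] [CommRing B] [IsDedekindDomain B] [Algebra L B] [Algebra B F]
    [IsScalarTower L B F] [IsFractionRing B F] (P : HeightOneSpectrum B) :
    ∃ (Q : FFPrime L M) (e : ℕ), e ≠ 0 ∧
      ∀ x : F, Q.v (algebraMap F M x) = e * (ofHeightOneSpectrum L F P).v x := by
  let _ : Algebra B M := Algebra.compHom M (algebraMap B F)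
  have : IsScalarTower B F M := .of_algebraMap_eq fun _ => rfl
  have : IsScalarTower L B M := .to₁₂₄ L B F M
  let C := integralClosure B M
  have : IsDedekindDomain C := integralClosure.isDedekindDomain B F M
  have : IsFractionRing C M := integralClosure.isFractionRing_of_finite_extension F M
  have : FaithfulSMul B M := .trans B F M
  have : FaithfulSMul B C := .tower_bot B C M
  have := P.isMaximal
  obtain ⟨Q, hQ, hQP⟩ := Ideal.exists_maximal_ideal_liesOver_of_isIntegral (S := C) P.asIdeal
  let w : HeightOneSpectrum C := ⟨Q, hQ.isPrime, Ideal.ne_bot_of_liesOver_of_ne_bot P.ne_bot Q⟩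
  have : w.asIdeal.LiesOver P.asIdeal := hQP
  refine ⟨ofHeightOneSpectrum L M w, P.asIdeal.ramificationIdx' w.asIdeal,
    Ideal.IsDedekindDomain.ramificationIdx'_ne_zero_of_liesOver w.asIdeal P.ne_bot, fun x => ?_⟩
  simp only [ofHeightOneSpectrum, ← valuation_liesOver M P w x, log_pow, nsmul_eq_mul, mul_neg]

end FFPrime

/-- The divisor of `x : M` is a `q`-th power and is supported at primes of `M` that are unramified
over `K`, in the sense that some element of `K` has valuation one. These are the conditions imposed
on each `z + b i` in the main theorem. -/
def HasUnramifiedPowDivisor (L K : Type*) {M : Type*} [Field L] [Field K] [Field M] [Algebra L M]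
    [Algebra K M] (q : ℕ) (x : M) : Prop :=
  ∀ Q : FFPrime L M, (q : ℤ) ∣ Q.v x ∧ (Q.v x ≠ 0 → ∃ r : K, Q.v (algebraMap K M r) = 1)

namespace HasUnramifiedPowDivisor

variable {L K F M : Type*} [Field L] [Field K] [Field F] [Field M] [Algebra L M]
  [Algebra F M] {q : ℕ}

theorem neg [Algebra K M] {x : M} (hx : x ≠ 0) (h : HasUnramifiedPowDivisor L K q x) :
    HasUnramifiedPowDivisor L K q (-x) := fun Q => by
  rw [Q.map_neg hx]
  exact h Q

theorem tower_top [Algebra K M] [Algebra K F] [IsScalarTower K F M] {x : M}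
    (h : HasUnramifiedPowDivisor L K q x) : HasUnramifiedPowDivisor L F q x := fun Q =>
  ⟨(h Q).1, fun hQ =>
    let ⟨r, hr⟩ := (h Q).2 hQ
    ⟨algebraMap K F r, by rw [← IsScalarTower.algebraMap_apply, hr]⟩⟩

variable [Algebra L F] [IsScalarTower L F M] [FiniteDimensional F M] [Algebra.IsSeparable F M]

theorem dvd_log_valuation {B : Type*} [CommRing B] [IsDedekindDomain B] [Algebra L B] [Algebra B F]
    [IsScalarTower L B F] [IsFractionRing B F] {x : F}
    (h : HasUnramifiedPowDivisor L F q (algebraMap F M x)) (P : HeightOneSpectrum B) :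
    (q : ℤ) ∣ log (P.valuation F x) := by
  obtain ⟨Q, e, he, hQ⟩ := FFPrime.exists_over_ofHeightOneSpectrum (L := L) (F := F) (M := M) P
  obtain ⟨hdvd, hunram⟩ := h Q
  rw [← dvd_neg]
  change (q : ℤ) ∣ (FFPrime.ofHeightOneSpectrum L F P).v x
  rw [hQ] at hdvd hunram
  by_cases hv : (FFPrime.ofHeightOneSpectrum L F P).v x = 0
  · exact hv ▸ dvd_zero _
  · obtain ⟨r, hr⟩ := hunram (mul_ne_zero (by exact_mod_cast he) hv)
    rw [hQ] at hr
    -- An element of `F` of valuation one forces the ramification index `e` to be a unit.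
    exact (IsUnit.of_mul_eq_one _ hr).dvd_mul_left.1 hdvd

variable {A : Type*} [CommRing A] [IsDomain A] [IsPrincipalIdealRing A] [Algebra L A] [Algebra A K]
  [IsFractionRing A K]

theorem exists_norm_eq_unit_mul_pow [Algebra A F] [IsScalarTower L A F] [Algebra K F]
    [IsScalarTower A K F] [FiniteDimensional K F] [Algebra.IsSeparable K F] (hq : q ≠ 0) {x : F}
    (hx : x ≠ 0) (h : HasUnramifiedPowDivisor L F q (algebraMap F M x)) :
    ∃ (u : Aˣ) (r : K), Algebra.norm K x = algebraMap A K u * r ^ q := by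
  have : IsDedekindDomain (integralClosure A F) := integralClosure.isDedekindDomain A K F
  have : IsFractionRing (integralClosure A F) F :=
    integralClosure.isFractionRing_of_finite_extension K F
  exact exists_norm_eq_unit_mul_pow_of_dvd_log_valuation (B := integralClosure A F) hq hx
    h.dvd_log_valuation

end HasUnramifiedPowDivisor

section Frobenius

theorem mem_lifts_of_eval_mem_range {k K ι : Type*} [Field k] [Field K] [Fintype ι] {φ : k →+* K}
    {f : K[X]} {x : ι → k} (hx : Function.Injective x) (hf : f.degree < Fintype.card ι)
    (h : ∀ i, f.eval (φ (x i)) ∈ φ.range) : f ∈ lifts φ := by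
  classical
  choose y hy using h
  refine (mem_lifts f).2 ⟨Lagrange.interpolate Finset.univ x y, ?_⟩
  refine eq_of_degrees_lt_of_eval_index_eq (v := φ ∘ x) Finset.univ
    (φ.injective.comp hx).injOn ?_ hf fun i _ => ?_
  · rw [degree_map]
    exact Lagrange.degree_interpolate_lt y hx.injOn
  · rw [Function.comp_apply, eval_map_apply, ← hy,
      Lagrange.eval_interpolate_at_node y hx.injOn (Finset.mem_univ i)]

theorem mem_range_algebraMap_of_isSeparable_of_pow_mem {M E : Type*} [Field M] [Field E]
    [Algebra M E] (p : ℕ) [ExpChar M p] {m : ℕ} {u : E} (hu : IsSeparable M u)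
    (hpow : u ^ p ^ m ∈ (algebraMap M E).range) : u ∈ (algebraMap M E).range := by
  have hinf : u ∈ separableClosure M E ⊓ perfectClosure M E :=
    IntermediateField.mem_inf.2 ⟨hu, (mem_perfectClosure_iff_pow_mem p).2 ⟨m, hpow⟩⟩
  rwa [separableClosure_inf_perfectClosure] at hinf

variable {K M : Type*} [Field K] [Field M] [Algebra K M] {p : ℕ} [ExpChar K p] {m : ℕ} {z : M}

theorem exists_eq_pow_of_minpoly_mem_lifts (hz : IsSeparable K z)
    (hf : minpoly K z ∈ lifts (iterateFrobenius K p m)) : ∃ c : M, z = c ^ p ^ m := by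
  have : ExpChar M p := expChar_of_injective_algebraMap (algebraMap K M).injective p
  let E := AlgebraicClosure M
  have : ExpChar E p := expChar_of_injective_algebraMap (algebraMap M E).injective p
  have hq : 0 < p ^ m := pow_pos (expChar_pos K p) m
  obtain ⟨u, hu⟩ := IsAlgClosed.exists_pow_nat_eq (algebraMap M E z) hq
  obtain ⟨g, hg⟩ := (mem_lifts _).1 hf
  have hgsep : g.Separable := by
    rw [← separable_map (iterateFrobenius K p m), hg]
    exact hz
  have hroot : aeval u g = 0 := by
    rw [← pow_eq_zero_iff hq.ne', ← iterateFrobenius_def, aeval_def, hom_eval₂,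
      ← RingHom.iterateFrobenius_comm, ← eval₂_map, hg, iterateFrobenius_def, hu, ← aeval_def,
      aeval_algebraMap_apply, minpoly.aeval, map_zero]
  have husep : IsSeparable K u := hgsep.of_dvd (minpoly.dvd K u hroot)
  obtain ⟨c, rfl⟩ :=
    mem_range_algebraMap_of_isSeparable_of_pow_mem p (husep.tower_top M) ⟨z, hu.symm⟩
  exact ⟨c, (algebraMap M E).injective (by rw [map_pow, hu])⟩

end Frobenius

theorem eval_minpoly_gen_eq_norm {K F : Type*} [Field K] [Field F] [Algebra K F]
    (pb : PowerBasis K F) (c : K) :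
    (minpoly K pb.gen).eval c = Algebra.norm K (algebraMap K F c - pb.gen) := by
  rw [← charpoly_leftMulMatrix, Matrix.eval_charpoly, Algebra.norm_eq_matrix_det pb.basis, map_sub,
    AlgHom.commutes]
  rfl

section PrincipalIdealRing

variable {L A K M : Type*} [Field L] [CommRing A] [IsDomain A] [IsPrincipalIdealRing A] [Field K]
  [Field M] [Algebra L A] [Algebra A K] [IsFractionRing A K] [Algebra L K] [IsScalarTower L A K]
  [Algebra L M] [Algebra A M] [Algebra K M] [IsScalarTower L K M] [IsScalarTower A K M]
  [FiniteDimensional K M] [Algebra.IsSeparable K M] {z : M}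

theorem HasUnramifiedPowDivisor.exists_eval_minpoly_eq_unit_mul_pow {q : ℕ} (hq : q ≠ 0) {c : K}
    (hzc : z - algebraMap K M c ≠ 0)
    (h : HasUnramifiedPowDivisor L K q (z - algebraMap K M c)) :
    ∃ (u : Aˣ) (r : K), (minpoly K z).eval c = algebraMap A K u * r ^ q := by
  let F := IntermediateField.adjoin K {z}
  let pb := IntermediateField.adjoin.powerBasis (IsIntegral.of_finite K z)
  have : IsScalarTower L F M := .of_algebraMap_eq fun _ => rfl
  have : IsScalarTower A F M := .of_algebraMap_eq fun _ => rfl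
  have : IsScalarTower L A M := .to₁₂₄ L A K M
  have : IsScalarTower L A F := .to₁₂₃ L A F M
  have hmap : algebraMap F M (algebraMap K F c - pb.gen) = -(z - algebraMap K M c) := by
    rw [map_sub, neg_sub]
    rfl
  have hmin : minpoly K z = minpoly K pb.gen :=
    minpoly.algebraMap_eq (algebraMap F M).injective pb.gen
  have hdiv : HasUnramifiedPowDivisor L F q (algebraMap F M (algebraMap K F c - pb.gen)) :=
    hmap ▸ (h.neg hzc).tower_top
  rw [hmin, eval_minpoly_gen_eq_norm]
  refine hdiv.exists_norm_eq_unit_mul_pow hq fun h0 => neg_ne_zero.2 hzc ?_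
  rw [← hmap, h0, map_zero]

theorem exists_eq_pow_of_hasUnramifiedPowDivisor {p : ℕ} [ExpChar K p] {m : ℕ}
    (hunits : ∀ u : Aˣ, algebraMap A K u ∈ (iterateFrobenius K p m).range)
    {ι : Type*} [Fintype ι] {x : ι → K} (hx : Function.Injective x)
    (hcard : (minpoly K z).natDegree < Fintype.card ι)
    (hz : ∀ i, z - algebraMap K M (x i ^ p ^ m) ≠ 0)
    (hdiv : ∀ i, HasUnramifiedPowDivisor L K (p ^ m) (z - algebraMap K M (x i ^ p ^ m))) :
    ∃ c : M, z = c ^ p ^ m := by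
  refine exists_eq_pow_of_minpoly_mem_lifts (Algebra.IsSeparable.isSeparable K z)
    (mem_lifts_of_eval_mem_range hx
      (degree_le_natDegree.trans_lt (by exact_mod_cast hcard)) fun i => ?_)
  obtain ⟨u, r, hur⟩ := (hdiv i).exists_eval_minpoly_eq_unit_mul_pow (A := A)
    (pow_ne_zero m (expChar_pos K p).ne') (hz i)
  rw [iterateFrobenius_def, hur]
  exact mul_mem (hunits u) ⟨r, iterateFrobenius_def p m r⟩

end PrincipalIdealRing

section RationalFunctionField

variable {L M : Type*} [Field L] [Field M] [Algebra L M] {t : M}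

theorem isPrincipalIdealRing_adjoin_of_transcendental (ht : Transcendental L t) :
    IsPrincipalIdealRing (Algebra.adjoin L {t}) :=
  .of_surjective _ (algEquivOfTranscendental L t ht).surjective

theorem exists_algebraMap_eq_of_units_adjoin (ht : Transcendental L t)
    (u : (Algebra.adjoin L {t})ˣ) : ∃ c : L, algebraMap L (Algebra.adjoin L {t}) c = u := by
  let e := algEquivOfTranscendental L t ht
  obtain ⟨c, -, hc⟩ := isUnit_iff.1 (u.isUnit.map e.symm)
  refine ⟨c, ?_⟩
  rw [← e.apply_symm_apply (u : Algebra.adjoin L {t}), ← hc, ← algebraMap_eq, e.commutes]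

open IntermediateField.algebraAdjoinAdjoin in
theorem stmt_5_general (p : ℕ) [ExpChar L p] [PerfectField L] (ht : Transcendental L t)
    [FiniteDimensional (IntermediateField.adjoin L {t}) M]
    [Algebra.IsSeparable (IntermediateField.adjoin L {t}) M] (m : ℕ) {z : M}
    {ι : Type*} [Fintype ι] {b : ι → L} (hb : Function.Injective b)
    (hcard : (minpoly (IntermediateField.adjoin L {t}) z).natDegree < Fintype.card ι)
    (hz : ∀ i, z + algebraMap L M (b i) ≠ 0)
    (hdiv : ∀ (P : FFPrime L M) i, (p ^ m : ℤ) ∣ P.v (z + algebraMap L M (b i)))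
    (hunram : ∀ (P : FFPrime L M) i, P.v (z + algebraMap L M (b i)) ≠ 0 → P.UnramifiedOver t) :
    ∃ c : M, z = c ^ p ^ m := by
  let A := Algebra.adjoin L {t}
  let K := IntermediateField.adjoin L {t}
  have : IsPrincipalIdealRing A := isPrincipalIdealRing_adjoin_of_transcendental ht
  have : ExpChar K p := expChar_of_injective_algebraMap (algebraMap L K).injective p
  have hroot (a : L) : ∃ d : L, d ^ p ^ m = a := (iterateFrobeniusEquiv L p m).surjective a
  have hunits (u : Aˣ) : algebraMap A K u ∈ (iterateFrobenius K p m).range := by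
    obtain ⟨c, hc⟩ := exists_algebraMap_eq_of_units_adjoin ht u
    obtain ⟨d, rfl⟩ := hroot c
    refine ⟨algebraMap L K d, ?_⟩
    rw [iterateFrobenius_def, ← map_pow, ← hc, ← IsScalarTower.algebraMap_apply]
  choose x hx using fun i => hroot (-b i)
  have hxinj : Function.Injective x := fun i j hij => hb (neg_injective (by rw [← hx, ← hx, hij]))
  have hzx (i : ι) :
      z + algebraMap L M (b i) = z - algebraMap K M (algebraMap L K (x i) ^ p ^ m) := by
    rw [← map_pow, hx, ← IsScalarTower.algebraMap_apply, map_neg, sub_neg_eq_add]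
  refine exists_eq_pow_of_hasUnramifiedPowDivisor (L := L) hunits
    ((algebraMap L K).injective.comp hxinj) hcard (fun i => hzx i ▸ hz i) fun i P => ?_
  rw [Function.comp_apply, ← hzx]
  refine ⟨by exact_mod_cast hdiv P i, fun hP => ?_⟩
  obtain ⟨r, hr, -, hr1⟩ := hunram P i hP
  exact ⟨⟨r, hr⟩, hr1⟩

end RationalFunctionField

/-- Let `L` be a perfect field of characteristic `p > 0` and `M` a function field with
constant field `L`, with `M/L(t)` finite separable of degree `n`. Let `m ≥ 1`, `z ∈ M`,
and `b_0 = 0, b_1, …, b_n` pairwise distinct elements of `L` with `z + b_i ≠ 0`. If for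
each `i` the divisor of `z + b_i` is a `p^m`-th power (i.e. `p^m` divides the order of
`z + b_i` at every prime) and `z + b_i` has no zeros or poles at primes ramifying in
`M/L(t)`, then `z` is a `p^m`-th power in `M`. -/
theorem stmt_5 {L M : Type*} [Field L] [Field M] [Algebra L M]
    (p : ℕ) (hp : p.Prime) [CharP L p] [PerfectField L]
    (t : M) (htrans : Transcendental L t)
    (hfin : FiniteDimensional (IntermediateField.adjoin L {t}) M)
    (hsep : Algebra.IsSeparable (IntermediateField.adjoin L {t}) M)
    (hconst : ∀ x : M, IsAlgebraic L x → x ∈ (algebraMap L M).range)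
    (n : ℕ) (hn : Module.finrank (IntermediateField.adjoin L {t}) M = n)
    (m : ℕ) (hm : 1 ≤ m)
    (z : M) (b : Fin (n + 1) → L) (hb0 : b 0 = 0) (hb : Function.Injective b)
    (hz : ∀ i, z + algebraMap L M (b i) ≠ 0)
    (hdiv : ∀ (P : FFPrime L M) (i : Fin (n + 1)),
      (p ^ m : ℤ) ∣ P.v (z + algebraMap L M (b i)))
    (hunram : ∀ (P : FFPrime L M) (i : Fin (n + 1)),
      P.v (z + algebraMap L M (b i)) ≠ 0 → P.UnramifiedOver t) :
    ∃ c : M, z = c ^ p ^ m := by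
  have := ExpChar.prime hp (R := L)
  have hcard :
      (minpoly (IntermediateField.adjoin L {t}) z).natDegree < Fintype.card (Fin (n + 1)) := by
    simpa [← hn, Nat.lt_succ_iff] using minpoly.natDegree_le z
  exact stmt_5_general p htrans m hb hcard hz hdiv hunram
end

section
/- Let L be a field of characteristic p > 0, let a ∈ L, and let δ be a root of X^p − X − a in an algebraic closure of L with δ ∉ L (so [L(δ):L] = p). Let u : L^× → ℤ be a normalized discrete valuation on L and let w : L(δ)^× → ℤ be a normalized discrete valuation on L(δ) lying above u, i.e. there is an integer e ≥ 1 (the ramification index) with w(x) = e·u(x) for all x ∈ L^×. Then: (i) if u(a) ≥ 0, then e = 1; (ii) if u(a) < 0 and p ∤ u(a), then e = p. -/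
/-!
Write the valuations multiplicatively, with `v` the one on `M = L(δ)`.

If `v a ≤ 1`, then `v δ ≤ 1`, and the residue of `δ` is a root of the reduced Artin–Schreier
polynomial. When it is not in the residue field `k` of `L`, it has degree `p` over `k`, so
`1, δ, …, δ ^ (p - 1)` have linearly independent residues and `v (∑ i, c i * δ ^ i)` is the largest
`v (c i)`. When it is the residue of some `c ∈ L`, the identity `δ - (b ^ p - a) = (δ - b) ^ p`
improves `c` to arbitrarily good approximations of `δ`, so `L` is dense in `M`. In both cases `v`
has the same values on `M` as on `L`.

If `v a > 1`, then `v δ ^ p = v a`, which forces `p ∣ e`, while `e ≤ [M : L] ≤ p`.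
-/

open Polynomial IsLocalRing WithZero

section ArtinSchreierPolynomial

variable {k κ : Type*} [Field k] [Field κ] [Algebra k κ]

theorem natDegree_X_pow_sub_X_sub_C {n : ℕ} (hn : 1 < n) (b : k) :
    (X ^ n - X - C b : k[X]).natDegree = n := by
  rw [natDegree_sub_C, FiniteField.X_pow_card_sub_X_natDegree_eq k hn]

theorem X_pow_sub_X_sub_C_ne_zero {n : ℕ} (hn : 1 < n) (b : k) : (X ^ n - X - C b : k[X]) ≠ 0 :=
  ne_zero_of_natDegree_gt (n := 1) (by rwa [natDegree_X_pow_sub_X_sub_C hn])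

theorem aeval_X_pow_sub_X_sub_C {R A : Type*} [CommRing R] [Ring A] [Algebra R A] {n : ℕ} {x : A}
    {b : R} (hx : x ^ n - x = algebraMap R A b) : aeval x (X ^ n - X - C b : R[X]) = 0 := by
  simp [hx]

variable {p : ℕ} [Fact p.Prime]

theorem mem_range_algebraMap_of_pow_eq_self [CharP κ p] {x : κ} (hx : x ^ p = x) :
    x ∈ (algebraMap k κ).fieldRange :=
  (bot_le : (⊥ : Subfield κ) ≤ (algebraMap k κ).fieldRange)
    ((Subfield.mem_bot_iff_pow_eq_self κ p).2 hx)

theorem splits_X_pow_sub_X_sub_C [CharP k p] {x b : k} (hx : x ^ p - x = b) :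
    (X ^ p - X - C b : k[X]).Splits := by
  have hsplits : (X ^ p - X : k[X]).Splits := by
    simpa using (FiniteField.splits_X_pow_card_sub_X (p := p) (K := ZMod p)).map
      (ZMod.castHom dvd_rfl k)
  have htranslate : (X ^ p - X - C b : k[X]) = (X ^ p - X : k[X]).comp (X - C x) := by
    simp only [← hx, sub_comp, pow_comp, X_comp, map_sub, map_pow, sub_pow_char]
    ring
  exact htranslate ▸ hsplits.comp_X_sub_C x

theorem mem_range_algebraMap_of_forall_mem_roots_sub {f : k[X]} (hf : f.Monic)
    (hsplits : (f.map (algebraMap k κ)).Splits) (hdeg : (f.natDegree : κ) ≠ 0) {x : κ}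
    (hroots : ∀ r ∈ (f.map (algebraMap k κ)).roots, r - x ∈ (algebraMap k κ).fieldRange) :
    x ∈ (algebraMap k κ).fieldRange := by
  have hsum : (f.map (algebraMap k κ)).roots.sum ∈ (algebraMap k κ).fieldRange := by
    have h := hsplits.nextCoeff_eq_neg_sum_roots_of_monic (hf.map _)
    rw [nextCoeff_map (algebraMap k κ).injective] at h
    exact neg_mem_iff.1 (h ▸ ⟨_, rfl⟩)
  have hsum_sub : (f.map (algebraMap k κ)).roots.sum - f.natDegree * x ∈
      (algebraMap k κ).fieldRange := by
    have h := multiset_sum_mem _ (Multiset.forall_mem_map_iff.2 hroots)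
    rwa [Multiset.sum_map_sub, Multiset.map_id', Multiset.map_const', Multiset.sum_replicate,
      ← hsplits.natDegree_eq_card_roots, natDegree_map, nsmul_eq_mul] at h
  have hdeg_mul : (f.natDegree : κ) * x ∈ (algebraMap k κ).fieldRange := by
    simpa using sub_mem hsum hsum_sub
  simpa [hdeg] using mul_mem (inv_mem (natCast_mem _ f.natDegree)) hdeg_mul

theorem natDegree_minpoly_of_pow_sub_self_eq [CharP k p] {x : κ} {b : k}
    (hx : x ^ p - x = algebraMap k κ b) (hxk : x ∉ (algebraMap k κ).fieldRange) :
    (minpoly k x).natDegree = p := by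
  have : CharP κ p := charP_of_injective_algebraMap (algebraMap k κ).injective p
  have hp : 1 < p := (Fact.out : p.Prime).one_lt
  have hP0 : (X ^ p - X - C b : k[X]) ≠ 0 := X_pow_sub_X_sub_C_ne_zero hp b
  have hint : IsIntegral k x := IsAlgebraic.isIntegral ⟨_, hP0, aeval_X_pow_sub_X_sub_C hx⟩
  have hdvd : minpoly k x ∣ X ^ p - X - C b := minpoly.dvd k x (aeval_X_pow_sub_X_sub_C hx)
  have hdvd_map : (minpoly k x).map (algebraMap k κ) ∣ X ^ p - X - C (algebraMap k κ b) := by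
    simpa using Polynomial.map_dvd (algebraMap k κ) hdvd
  refine (natDegree_X_pow_sub_X_sub_C hp b ▸ natDegree_le_of_dvd hdvd hP0).eq_of_not_lt
    fun hlt => hxk ?_
  refine mem_range_algebraMap_of_forall_mem_roots_sub (minpoly.monic hint)
    ((splits_X_pow_sub_X_sub_C hx).of_dvd (X_pow_sub_X_sub_C_ne_zero hp _) hdvd_map) ?_ ?_
  · rw [Ne, CharP.cast_eq_zero_iff κ p]
    exact Nat.not_dvd_of_pos_of_lt (minpoly.natDegree_pos hint) hlt
  · intro r hr
    have hr_root : r ^ p - r - algebraMap k κ b = 0 := by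
      simpa using (isRoot_of_mem_roots hr).dvd hdvd_map
    apply mem_range_algebraMap_of_pow_eq_self (p := p)
    rw [sub_pow_char]
    linear_combination hr_root - hx

end ArtinSchreierPolynomial

section Finrank

variable {L M : Type*} [Field L] [Field M] [Algebra L M]

theorem finiteDimensional_of_adjoin_eq_top {δ : M} (hδ : IsIntegral L δ)
    (hgen : IntermediateField.adjoin L {δ} = ⊤) : FiniteDimensional L M := by
  have := IntermediateField.adjoin.finiteDimensional hδ
  rw [hgen] at this
  exact IntermediateField.topEquiv.toLinearEquiv.finiteDimensional

theorem finrank_le_natDegree_of_adjoin_eq_top {δ : M} {P : L[X]} (hP : P ≠ 0)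
    (hδ : aeval δ P = 0) (hgen : IntermediateField.adjoin L {δ} = ⊤) :
    Module.finrank L M ≤ P.natDegree := by
  have hint : IsIntegral L δ := IsAlgebraic.isIntegral ⟨P, hP, hδ⟩
  rw [← IntermediateField.finrank_top', ← hgen, IntermediateField.adjoin.finrank hint]
  exact natDegree_le_of_dvd (minpoly.dvd L δ hδ) hP

end Finrank

section PowSubSelf

variable {R Γ₀ : Type*} [Ring R] [LinearOrderedCommGroupWithZero Γ₀] (v : Valuation R Γ₀)
  {n : ℕ} {x : R}

theorem valuation_pow_sub_self_of_one_lt (hn : 1 < n) (hx : 1 < v x) :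
    v (x ^ n - x) = v x ^ n := by
  rw [v.map_sub_eq_of_lt_left, map_pow]
  rw [map_pow]
  exact lt_self_pow₀ hx hn

theorem valuation_pow_sub_self_le_one_iff (hn : 1 < n) : v (x ^ n - x) ≤ 1 ↔ v x ≤ 1 := by
  refine ⟨fun h => ?_, fun h => v.map_sub_le (by rw [map_pow]; exact pow_le_one₀ zero_le h) h⟩
  by_contra! hx
  rw [valuation_pow_sub_self_of_one_lt v hn hx] at h
  exact h.not_gt (one_lt_pow₀ hx (by lia))

theorem valuation_pow_eq_of_pow_sub_self_eq (hn : 1 < n) {y : R} (hxy : x ^ n - x = y)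
    (hy : 1 < v y) : v x ^ n = v y := by
  subst hxy
  refine (valuation_pow_sub_self_of_one_lt v hn (lt_of_not_ge fun hx => ?_)).symm
  exact hy.not_ge ((valuation_pow_sub_self_le_one_iff v hn).2 hx)

end PowSubSelf

section ValueGroupCosets

theorem sum_ne_zero_of_injOn_valuation {R Γ₀ ι : Type*} [Ring R]
    [LinearOrderedCommGroupWithZero Γ₀] (v : Valuation R Γ₀) {s : Finset ι} {x : ι → R}
    (hs : s.Nonempty) (hx : ∀ i ∈ s, v (x i) ≠ 0) (hinj : Set.InjOn (fun i => v (x i)) s) :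
    ∑ i ∈ s, x i ≠ 0 := by
  classical
  obtain ⟨i, hi, hmax⟩ := s.exists_max_image (fun i => v (x i)) hs
  have hsum : v (∑ i ∈ s, x i) = v (x i) := by
    refine v.map_sum_eq_of_lt hi fun j hj => ?_
    obtain ⟨hj, hji⟩ := Finset.mem_sdiff.1 hj
    exact (hmax j hj).lt_of_ne fun h => hji (Finset.mem_singleton.2 (hinj hj hi h))
  intro h0
  rw [h0, map_zero] at hsum
  exact hx i hi hsum.symm

variable {L M Γ₀ : Type*} [Field L] [Field M] [Algebra L M] [LinearOrderedCommGroupWithZero Γ₀]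
  (v : Valuation M Γ₀)

theorem linearIndependent_of_valuation_cosets_ne {ι : Type*} {b : ι → M} (hb0 : ∀ i, b i ≠ 0)
    (hb : ∀ i j, i ≠ j → ∀ c : L, v (c • b i) ≠ v (b j)) : LinearIndependent L b := by
  classical
  rw [linearIndependent_iff']
  intro s c hsum
  by_contra! hne
  refine sum_ne_zero_of_injOn_valuation v (s := {i ∈ s | c i ≠ 0}) (x := fun i => c i • b i)
    ?_ ?_ ?_ ?_
  · exact hne.imp fun i hi => Finset.mem_filter.2 hi
  · exact fun i hi => v.ne_zero_iff.2 (smul_ne_zero (Finset.mem_filter.1 hi).2 (hb0 i))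
  · intro i _ j hj hij
    by_contra h
    have hcj : algebraMap L M (c j) ≠ 0 := (_root_.map_ne_zero _).2 (Finset.mem_filter.1 hj).2
    refine hb i j h ((c j)⁻¹ * c i) ?_
    simp only [Algebra.smul_def, map_mul, map_inv₀] at hij ⊢
    rw [mul_assoc, hij, inv_mul_cancel_left₀ (v.ne_zero_iff.2 hcj)]
  · rw [Finset.sum_filter_of_ne fun i _ => left_ne_zero_of_smul, hsum]

theorem le_finrank_of_valuation_pow_ne [FiniteDimensional L M] {x : M} (hx : x ≠ 0) {e : ℕ}
    (he : ∀ i, 0 < i → i < e → ∀ c : L, v (algebraMap L M c) ≠ v (x ^ i)) :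
    e ≤ Module.finrank L M := by
  suffices h : LinearIndependent L fun i : Fin e => x ^ (i : ℕ) by
    simpa using h.fintype_card_le_finrank
  refine linearIndependent_of_valuation_cosets_ne v (fun i => pow_ne_zero _ hx)
    fun i j hij c hc => ?_
  have hpow : ∀ {m n : ℕ}, m ≤ n → v (x ^ n) = v (x ^ (n - m)) * v (x ^ m) := fun h => by
    rw [← map_mul, pow_sub_mul_pow x h]
  have hv0 : ∀ n : ℕ, v (x ^ n) ≠ 0 := fun n => v.ne_zero_iff.2 (pow_ne_zero n hx)
  rw [Algebra.smul_def, map_mul] at hc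
  rcases lt_or_gt_of_ne hij with hlt | hgt
  · rw [hpow hlt.le] at hc
    exact he (j - i) (by lia) (by lia) c (mul_right_cancel₀ (hv0 i) hc)
  · rw [hpow hgt.le, ← mul_assoc, mul_eq_right₀ (hv0 j)] at hc
    refine he (i - j) (by lia) (by lia) c⁻¹ ?_
    rw [map_inv₀, map_inv₀, inv_eq_of_mul_eq_one_right hc]

end ValueGroupCosets

section IndependentResidues

variable {L M Γ₀ Γ₁ : Type*} [Field L] [Field M] [Algebra L M]
  [LinearOrderedCommGroupWithZero Γ₀] [LinearOrderedCommGroupWithZero Γ₁]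
  (vL : Valuation L Γ₀) (v : Valuation M Γ₁) [vL.HasExtension v]
  {ι : Type*} [Fintype ι] {b : ι → v.valuationSubring}

theorem valuation_sum_smul_eq_one_of_linearIndependent_residue
    (hb : LinearIndependent (ResidueField vL.valuationSubring) fun i => residue _ (b i))
    {c : ι → L} (hc : ∀ i, vL (c i) ≤ 1) {i : ι} (hi : vL (c i) = 1) :
    v (∑ j, c j • (b j : M)) = 1 := by
  let c' : ι → vL.valuationSubring := fun j => ⟨c j, hc j⟩
  have hcoe : ((∑ j, algebraMap _ v.valuationSubring (c' j) * b j : v.valuationSubring) : M) =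
      ∑ j, c j • (b j : M) := by
    push_cast
    simp only [c', Valuation.HasExtension.coe_algebraMap_valuationSubring_eq, Algebra.smul_def]
  rw [← hcoe]
  refine le_antisymm ((v.mem_valuationSubring_iff _).1 (Subtype.prop _)) (not_lt.1 fun hlt => ?_)
  have hres : ∑ j, residue _ (c' j) • residue _ (b j) = 0 := by
    simpa only [map_sum, map_mul, Algebra.smul_def,
      Valuation.HasExtension.algebraMap_residue_eq_residue_algebraMap] using
      (residue_eq_zero_iff _).2 ((Valuation.mem_maximalIdeal_iff M v).2 hlt)
  have hi0 := Fintype.linearIndependent_iff.1 hb (fun j => residue _ (c' j)) hres i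
  rw [residue_eq_zero_iff, Valuation.mem_maximalIdeal_iff] at hi0
  exact hi0.ne hi

theorem exists_valuation_sum_smul_eq_of_linearIndependent_residue
    (hb : LinearIndependent (ResidueField vL.valuationSubring) fun i => residue _ (b i))
    {c : ι → L} (hc : c ≠ 0) :
    ∃ i, c i ≠ 0 ∧ v (∑ j, c j • (b j : M)) = v (algebraMap L M (c i)) := by
  obtain ⟨k, hk⟩ := Function.ne_iff.1 hc
  have : Nonempty ι := ⟨k⟩
  obtain ⟨i, hmax⟩ := Finite.exists_max fun i => vL (c i)
  have hi : c i ≠ 0 := vL.pos_iff.1 ((vL.pos_iff.2 hk).trans_le (hmax k))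
  refine ⟨i, hi, ?_⟩
  have hone : v (∑ j, ((c i)⁻¹ * c j) • (b j : M)) = 1 := by
    refine valuation_sum_smul_eq_one_of_linearIndependent_residue vL v hb (i := i) (fun j => ?_) ?_
    · rw [map_mul, map_inv₀]
      exact inv_mul_le_one_of_le₀ (hmax j) zero_le
    · rw [inv_mul_cancel₀ hi, map_one]
  simp only [mul_smul, ← Finset.smul_sum] at hone
  rw [Algebra.smul_def, map_mul, map_inv₀, map_inv₀] at hone
  exact ((inv_mul_eq_one₀ (v.ne_zero_iff.2 ((_root_.map_ne_zero _).2 hi))).1 hone).symm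

theorem exists_valuation_eq_algebraMap_of_linearIndependent_residue [FiniteDimensional L M]
    (hb : LinearIndependent (ResidueField vL.valuationSubring) fun i => residue _ (b i))
    (hcard : Module.finrank L M ≤ Fintype.card ι) (x : M) :
    ∃ c : L, v x = v (algebraMap L M c) := by
  have hind : LinearIndependent L fun i => (b i : M) := by
    refine Fintype.linearIndependent_iff.2 fun c hsum => ?_
    by_contra! hc
    obtain ⟨i, hi, hv⟩ := exists_valuation_sum_smul_eq_of_linearIndependent_residue vL v hb
      (Function.ne_iff.2 hc)
    rw [hsum, map_zero, eq_comm, v.zero_iff, _root_.map_eq_zero] at hv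
    exact hi hv
  have hspan := hind.span_eq_top_of_card_eq_finrank' (hind.fintype_card_le_finrank.antisymm hcard)
  have hx : x ∈ Submodule.span L (Set.range fun i => (b i : M)) := hspan ▸ Submodule.mem_top
  obtain ⟨c, rfl⟩ := (Submodule.mem_span_range_iff_exists_fun L).1 hx
  rcases eq_or_ne c 0 with rfl | hc
  · exact ⟨0, by simp⟩
  · obtain ⟨i, -, hi⟩ := exists_valuation_sum_smul_eq_of_linearIndependent_residue vL v hb hc
    exact ⟨c i, hi⟩

end IndependentResidues

section Approximation

variable {L M Γ₀ : Type*} [Field L] [Field M] [Algebra L M] [LinearOrderedCommGroupWithZero Γ₀]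
  (v : Valuation M Γ₀)

variable (L) in
/-- The closure of `L` in `M` for the topology defined by `v`, as a subalgebra. It is described
by inequalities so that no topology has to be put on `M`. -/
def approximableSubalgebra : Subalgebra L M where
  carrier := {x | ∀ γ ≠ 0, ∃ c : L, v (x - algebraMap L M c) < γ}
  algebraMap_mem' c γ hγ := ⟨c, by simpa [zero_lt_iff] using hγ⟩
  add_mem' {x y} hx hy γ hγ := by
    obtain ⟨b, hb⟩ := hx γ hγ
    obtain ⟨c, hc⟩ := hy γ hγ
    refine ⟨b + c, ?_⟩
    rw [map_add, add_sub_add_comm]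
    exact v.map_add_lt hb hc
  mul_mem' {x y} hx hy γ hγ := by
    have scaled : ∀ z, (∀ γ ≠ 0, ∃ c : L, v (z - algebraMap L M c) < γ) →
        ∀ t : M, ∃ c : L, v (t * (z - algebraMap L M c)) < γ := by
      intro z hz t
      rcases eq_or_ne t 0 with rfl | ht
      · exact ⟨0, by simpa [zero_lt_iff] using hγ⟩
      · have hvt : v t ≠ 0 := v.ne_zero_iff.2 ht
        obtain ⟨c, hc⟩ := hz (γ / v t) (div_ne_zero hγ hvt)
        exact ⟨c, by rwa [map_mul, mul_comm, ← lt_div_iff₀ (zero_lt_iff.2 hvt)]⟩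
    obtain ⟨c, hc⟩ := scaled y hy x
    obtain ⟨b, hb⟩ := scaled x hx (algebraMap L M c)
    refine ⟨b * c, ?_⟩
    have hsplit : x * y - algebraMap L M (b * c) =
        x * (y - algebraMap L M c) + algebraMap L M c * (x - algebraMap L M b) := by
      rw [map_mul]
      ring
    exact hsplit ▸ v.map_add_lt hc hb

theorem exists_valuation_eq_algebraMap_of_mem_approximableSubalgebra {x : M}
    (hx : x ∈ approximableSubalgebra L v) : ∃ c : L, v x = v (algebraMap L M c) := by
  rcases eq_or_ne x 0 with rfl | hx0
  · exact ⟨0, by simp⟩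
  · obtain ⟨c, hc⟩ := hx (v x) (v.ne_zero_iff.2 hx0)
    exact ⟨c, (v.map_eq_of_sub_lt (v.map_sub_swap x _ ▸ hc)).symm⟩

variable {p : ℕ} [Fact p.Prime] [CharP M p] {a c : L} {δ : M}

theorem exists_sub_algebraMap_eq_pow (hδ : δ ^ p - δ = algebraMap L M a) (n : ℕ) :
    ∃ b : L, δ - algebraMap L M b = (δ - algebraMap L M c) ^ p ^ n := by
  induction n with
  | zero => exact ⟨c, by simp⟩
  | succ n ih =>
    obtain ⟨b, hb⟩ := ih
    refine ⟨b ^ p - a, ?_⟩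
    rw [pow_succ, pow_mul, ← hb, sub_pow_char, map_sub, map_pow, ← hδ]
    ring

theorem mem_approximableSubalgebra_of_valuation_sub_lt_one [MulArchimedean Γ₀]
    (hδ : δ ^ p - δ = algebraMap L M a) (hc : v (δ - algebraMap L M c) < 1) :
    δ ∈ approximableSubalgebra L v := by
  intro γ hγ
  obtain ⟨n, hn⟩ := exists_pow_lt₀ hc (Units.mk0 γ hγ)
  obtain ⟨b, hb⟩ := exists_sub_algebraMap_eq_pow (c := c) hδ n
  refine ⟨b, ?_⟩
  rw [hb, map_pow]
  have hnp : n ≤ p ^ n := (Nat.lt_pow_self (Fact.out : p.Prime).one_lt).le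
  exact (pow_le_pow_right_of_le_one' hc.le hnp).trans_lt hn

end Approximation

section ArtinSchreierExtension

theorem charP_residueField_valuationSubring {K Γ₀ : Type*} [Field K]
    [LinearOrderedCommGroupWithZero Γ₀] (v : Valuation K Γ₀) (p : ℕ) [Fact p.Prime] [CharP K p] :
    CharP (ResidueField v.valuationSubring) p := by
  have hp : (p : v.valuationSubring) = 0 := Subtype.ext (by simp)
  rw [CharP.charP_iff_prime_eq_zero Fact.out, ← map_natCast (residue v.valuationSubring), hp,
    map_zero]

variable {L M Γ₀ Γ₁ : Type*} [Field L] [Field M] [Algebra L M]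
  [LinearOrderedCommGroupWithZero Γ₀] [LinearOrderedCommGroupWithZero Γ₁]
  (vL : Valuation L Γ₀) (v : Valuation M Γ₁) [vL.HasExtension v]
  {p : ℕ} [Fact p.Prime] [CharP L p] {a : L} {δ : M}

theorem exists_valuation_sub_algebraMap_lt_one_of_residue_mem {d : v.valuationSubring}
    (hd : residue _ d ∈ (algebraMap (ResidueField vL.valuationSubring)
      (ResidueField v.valuationSubring)).fieldRange) :
    ∃ c : L, v (d - algebraMap L M c) < 1 := by
  obtain ⟨c, hc⟩ := hd
  obtain ⟨c, rfl⟩ := residue_surjective c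
  rw [Valuation.HasExtension.algebraMap_residue_eq_residue_algebraMap, eq_comm, ← sub_eq_zero,
    ← map_sub, residue_eq_zero_iff, Valuation.mem_maximalIdeal_iff] at hc
  exact ⟨c, hc⟩

theorem linearIndependent_residue_pow_of_pow_sub_self_eq {a : vL.valuationSubring}
    {d : v.valuationSubring} (hd : d ^ p - d = algebraMap _ _ a)
    (hres : residue _ d ∉ (algebraMap (ResidueField vL.valuationSubring)
      (ResidueField v.valuationSubring)).fieldRange) :
    LinearIndependent (ResidueField vL.valuationSubring)
      fun i : Fin p => residue _ (d ^ (i : ℕ)) := by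
  have := charP_residueField_valuationSubring vL p
  have hd_res : residue _ d ^ p - residue _ d =
      algebraMap (ResidueField vL.valuationSubring) _ (residue _ a) := by
    rw [Valuation.HasExtension.algebraMap_residue_eq_residue_algebraMap, ← hd, map_sub, map_pow]
  have hind := linearIndependent_pow (K := ResidueField vL.valuationSubring) (residue _ d)
  rw [natDegree_minpoly_of_pow_sub_self_eq hd_res hres] at hind
  simpa only [map_pow] using hind

theorem mem_approximableSubalgebra_of_adjoin_eq_top [FiniteDimensional L M]
    (hgen : IntermediateField.adjoin L {δ} = ⊤) (hδ : δ ∈ approximableSubalgebra L v) (x : M) :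
    x ∈ approximableSubalgebra L v := by
  have hx : x ∈ (IntermediateField.adjoin L {δ}).toSubalgebra := hgen ▸ trivial
  rw [IntermediateField.adjoin_toSubalgebra] at hx
  exact Algebra.adjoin_le (Set.singleton_subset_iff.2 hδ) hx

theorem finiteDimensional_of_pow_sub_self_eq {n : ℕ} (hn : 1 < n)
    (hδ : δ ^ n - δ = algebraMap L M a) (hgen : IntermediateField.adjoin L {δ} = ⊤) :
    FiniteDimensional L M :=
  finiteDimensional_of_adjoin_eq_top (IsAlgebraic.isIntegral
    ⟨_, X_pow_sub_X_sub_C_ne_zero hn a, aeval_X_pow_sub_X_sub_C hδ⟩) hgen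

theorem finrank_le_of_pow_sub_self_eq {n : ℕ} (hn : 1 < n)
    (hδ : δ ^ n - δ = algebraMap L M a) (hgen : IntermediateField.adjoin L {δ} = ⊤) :
    Module.finrank L M ≤ n := by
  simpa only [natDegree_X_pow_sub_X_sub_C hn] using finrank_le_natDegree_of_adjoin_eq_top
    (X_pow_sub_X_sub_C_ne_zero hn a) (aeval_X_pow_sub_X_sub_C hδ) hgen

theorem exists_valuation_eq_algebraMap_of_valuation_le_one [MulArchimedean Γ₁]
    (hδ : δ ^ p - δ = algebraMap L M a) (hgen : IntermediateField.adjoin L {δ} = ⊤)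
    (ha : v (algebraMap L M a) ≤ 1) (x : M) : ∃ c : L, v x = v (algebraMap L M c) := by
  have : CharP M p := charP_of_injective_algebraMap (algebraMap L M).injective p
  have hp : 1 < p := (Fact.out : p.Prime).one_lt
  have := finiteDimensional_of_pow_sub_self_eq hp hδ hgen
  let vL := v.comap (algebraMap L M)
  have : vL.HasExtension v := ⟨Valuation.IsEquiv.refl⟩
  let a' : vL.valuationSubring := ⟨a, ha⟩
  let d : v.valuationSubring := ⟨δ, (valuation_pow_sub_self_le_one_iff v hp).1 (hδ ▸ ha)⟩
  have hd : d ^ p - d = algebraMap _ _ a' := Subtype.ext hδ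
  by_cases hres : residue _ d ∈ (algebraMap (ResidueField vL.valuationSubring)
    (ResidueField v.valuationSubring)).fieldRange
  · obtain ⟨c, hc⟩ := exists_valuation_sub_algebraMap_lt_one_of_residue_mem vL v hres
    exact exists_valuation_eq_algebraMap_of_mem_approximableSubalgebra v
      (mem_approximableSubalgebra_of_adjoin_eq_top v hgen
        (mem_approximableSubalgebra_of_valuation_sub_lt_one v hδ hc) x)
  · exact exists_valuation_eq_algebraMap_of_linearIndependent_residue vL v
      (linearIndependent_residue_pow_of_pow_sub_self_eq vL v hd hres)
      (by simpa using finrank_le_of_pow_sub_self_eq hp hδ hgen) x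

end ArtinSchreierExtension

section RamificationIndex

variable {L M : Type*} [Field L] [Field M] [Algebra L M] {v : Valuation M ℤᵐ⁰} {x : M} {e : ℕ}
  {u : L → ℤ}

theorem ramificationIndex_le_finrank [FiniteDimensional L M] (hx : v x = exp (-1))
    (hu : ∀ c : L, c ≠ 0 → v (algebraMap L M c) = exp (-(e * u c))) :
    e ≤ Module.finrank L M := by
  have hx0 : x ≠ 0 := v.ne_zero_iff.1 (hx ▸ exp_ne_zero)
  refine le_finrank_of_valuation_pow_ne v hx0 fun i hi hie c hc => ?_
  have hc0 : c ≠ 0 := by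
    rintro rfl
    rw [map_zero, map_zero] at hc
    exact v.ne_zero_iff.2 (pow_ne_zero i hx0) hc.symm
  have hdvd : (e : ℤ) ∣ i := by
    rw [hu c hc0, map_pow, hx, ← exp_nsmul, exp_inj, nsmul_eq_mul, mul_neg_one, neg_inj] at hc
    exact ⟨u c, hc.symm⟩
  exact Nat.not_dvd_of_pos_of_lt hi hie (by exact_mod_cast hdvd)

variable {p : ℕ} [Fact p.Prime] {a : L} {δ : M}

theorem ramificationIndex_eq_one_of_valuation_le_one [CharP L p] (hx : v x = exp (-1))
    (hu : ∀ c : L, c ≠ 0 → v (algebraMap L M c) = exp (-(e * u c)))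
    (hδ : δ ^ p - δ = algebraMap L M a) (hgen : IntermediateField.adjoin L {δ} = ⊤)
    (ha : v (algebraMap L M a) ≤ 1) : e = 1 := by
  obtain ⟨c, hc⟩ := exists_valuation_eq_algebraMap_of_valuation_le_one v hδ hgen ha x
  have hc0 : c ≠ 0 := by
    rintro rfl
    rw [hx, map_zero, map_zero] at hc
    exact exp_ne_zero hc
  rw [hx, hu c hc0, exp_inj, neg_inj] at hc
  exact_mod_cast Int.eq_one_of_mul_eq_one_right (by positivity) hc.symm

theorem dvd_ramificationIndex_of_one_lt_valuation
    (hu : ∀ c : L, c ≠ 0 → v (algebraMap L M c) = exp (-(e * u c)))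
    (hδ : δ ^ p - δ = algebraMap L M a) (ha : 1 < v (algebraMap L M a)) (hpu : ¬(p : ℤ) ∣ u a) :
    p ∣ e := by
  have hp : p.Prime := Fact.out
  have ha0 : a ≠ 0 := by
    rintro rfl
    simp at ha
  have hpow : v δ ^ p = exp (-(e * u a)) :=
    hu a ha0 ▸ valuation_pow_eq_of_pow_sub_self_eq v hp.one_lt hδ ha
  have hvδ : v δ ≠ 0 := (pow_ne_zero_iff hp.ne_zero).1 (hpow ▸ exp_ne_zero)
  have hdvd : (p : ℤ) ∣ e * u a := by
    rw [← exp_log hvδ, ← exp_nsmul, exp_inj, nsmul_eq_mul] at hpow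
    exact dvd_neg.1 ⟨_, hpow.symm⟩
  exact_mod_cast ((Nat.prime_iff_prime_int.1 hp).dvd_or_dvd hdvd).resolve_right hpu

theorem ramificationIndex_eq_of_one_lt_valuation (he : 0 < e) (hx : v x = exp (-1))
    (hu : ∀ c : L, c ≠ 0 → v (algebraMap L M c) = exp (-(e * u c)))
    (hδ : δ ^ p - δ = algebraMap L M a) (hgen : IntermediateField.adjoin L {δ} = ⊤)
    (ha : 1 < v (algebraMap L M a)) (hpu : ¬(p : ℤ) ∣ u a) : e = p := by
  have hp : 1 < p := (Fact.out : p.Prime).one_lt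
  have := finiteDimensional_of_pow_sub_self_eq hp hδ hgen
  refine le_antisymm ?_ (Nat.le_of_dvd he (dvd_ramificationIndex_of_one_lt_valuation hu hδ ha hpu))
  exact (ramificationIndex_le_finrank hx hu).trans (finrank_le_of_pow_sub_self_eq hp hδ hgen)

end RamificationIndex

section MultiplicativeValuation

variable {K : Type*} [Field K] {w : K → ℤ}

open Classical in
/-- The valuation with values in `ℤᵐ⁰` attached to a discrete valuation `w` written additively on
the nonzero elements; it sends `0` to `0`, whatever the value of `w 0`. -/
noncomputable def multiplicativeValuation
    (hmul : ∀ x y : K, x ≠ 0 → y ≠ 0 → w (x * y) = w x + w y)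
    (hadd : ∀ x y : K, x ≠ 0 → y ≠ 0 → x + y ≠ 0 → min (w x) (w y) ≤ w (x + y)) :
    Valuation K ℤᵐ⁰ where
  toFun x := if x = 0 then 0 else exp (-w x)
  map_zero' := if_pos rfl
  map_one' := by simpa using hmul 1 1 one_ne_zero one_ne_zero
  map_mul' x y := by
    rcases eq_or_ne x 0 with rfl | hx
    · simp
    rcases eq_or_ne y 0 with rfl | hy
    · simp
    simp only [mul_eq_zero, hx, hy, or_self, if_false, hmul x y hx hy, neg_add, exp_add]
  map_add_le_max' x y := by
    rcases eq_or_ne x 0 with rfl | hx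
    · simp
    rcases eq_or_ne y 0 with rfl | hy
    · simp
    rcases eq_or_ne (x + y) 0 with hxy | hxy
    · simp [hxy]
    simp only [hx, hy, hxy, if_false, le_max_iff, exp_le_exp, neg_le_neg_iff]
    exact min_le_iff.1 (hadd x y hx hy hxy)

theorem multiplicativeValuation_apply
    (hmul : ∀ x y : K, x ≠ 0 → y ≠ 0 → w (x * y) = w x + w y)
    (hadd : ∀ x y : K, x ≠ 0 → y ≠ 0 → x + y ≠ 0 → min (w x) (w y) ≤ w (x + y))
    {x : K} (hx : x ≠ 0) : multiplicativeValuation hmul hadd x = exp (-w x) :=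
  if_neg hx

end MultiplicativeValuation

/-- Let `L` be a field of characteristic `p > 0`, `a ∈ L`, and `δ` a root of
`X^p - X - a` generating an extension `M = L(δ)` with `δ ∉ L`. Let `u` be a normalized
discrete valuation on `L` and `w` one on `M` lying above `u` with ramification index
`e`. Then `u(a) ≥ 0` implies `e = 1`, and `u(a) < 0` together with `p ∤ u(a)` implies
`e = p`. -/
theorem stmt_9 {L M : Type*} [Field L] [Field M] [Algebra L M]
    (p : ℕ) (hp : p.Prime) [CharP L p]
    (a : L) (δ : M)
    (hδ : δ ^ p - δ - algebraMap L M a = 0)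
    (hδL : δ ∉ (algebraMap L M).range)
    (hgen : IntermediateField.adjoin L {δ} = ⊤)
    (u : L → ℤ)
    (humul : ∀ x y : L, x ≠ 0 → y ≠ 0 → u (x * y) = u x + u y)
    (huadd : ∀ x y : L, x ≠ 0 → y ≠ 0 → x + y ≠ 0 → min (u x) (u y) ≤ u (x + y))
    (husurj : ∀ n : ℤ, ∃ x : L, x ≠ 0 ∧ u x = n)
    (w : M → ℤ)
    (hwmul : ∀ x y : M, x ≠ 0 → y ≠ 0 → w (x * y) = w x + w y)
    (hwadd : ∀ x y : M, x ≠ 0 → y ≠ 0 → x + y ≠ 0 → min (w x) (w y) ≤ w (x + y))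
    (hwsurj : ∀ n : ℤ, ∃ x : M, x ≠ 0 ∧ w x = n)
    (e : ℕ) (he : 1 ≤ e)
    (habove : ∀ x : L, x ≠ 0 → w (algebraMap L M x) = e * u x) :
    (0 ≤ u a → e = 1) ∧ (u a < 0 → ¬(p : ℤ) ∣ u a → e = p) := by
  have : Fact p.Prime := ⟨hp⟩
  have : CharP M p := charP_of_injective_algebraMap (algebraMap L M).injective p
  replace hδ : δ ^ p - δ = algebraMap L M a := sub_eq_zero.1 hδ
  have ha0 : a ≠ 0 := by
    rintro rfl
    exact hδL (mem_range_algebraMap_of_pow_eq_self (p := p) (by simpa [sub_eq_zero] using hδ))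
  let v := multiplicativeValuation hwmul hwadd
  have hv {y : M} (hy : y ≠ 0) : v y = exp (-w y) := multiplicativeValuation_apply hwmul hwadd hy
  have hu (c : L) (hc : c ≠ 0) : v (algebraMap L M c) = exp (-(e * u c)) := by
    rw [hv ((_root_.map_ne_zero _).2 hc), habove c hc]
  obtain ⟨x, hx0, hwx⟩ := hwsurj 1
  have hx : v x = exp (-1) := by rw [hv hx0, hwx]
  refine ⟨fun hua => ramificationIndex_eq_one_of_valuation_le_one hx hu hδ hgen ?_,
    fun hua hpu => ramificationIndex_eq_of_one_lt_valuation he hx hu hδ hgen ?_ hpu⟩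
  · rw [hu a ha0, ← exp_zero, exp_le_exp, neg_nonpos]
    positivity
  · rw [hu a ha0, ← exp_zero, exp_lt_exp, neg_pos]
    exact mul_neg_of_pos_of_neg (by exact_mod_cast he) hua
end

section
/- Let F be an algebraically closed field of characteristic p > 0 and set a = 1 if p > 2 and a = 2 if p = 2. Let M be a function field over F, and let t ∈ M be transcendental over F with M/F(t) separable and such that all zeros and poles of t are simple (so that in particular every prime of M occurring in the divisor of t is unramified over F(t)). Let σ, μ ∈ M and assume that every prime v of M with v(σ) < 0 or v(μ) < 0 is unramified over F(t). If t·(σ^{p^a} − σ) = μ^{p^a} − μ, then σ^{p^a} − σ = 0 and μ^{p^a} − μ = 0. -/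
/-!
With `q = p ^ a ≥ 3`, let `v` be a prime that is unramified over `F(t)`. Replacing `(t, σ, μ)` by
`(t⁻¹, μ, σ)` if necessary, `t` has no pole at `v`, and as `F` is algebraically closed, `t - d ^ q`
is a uniformizer for some `d ∈ F`. Writing `w = d * σ - μ`, so that `w ^ q = d ^ q * σ ^ q - μ ^ q`,
the equation becomes `(t - d ^ q) * σ ^ q + w ^ q = (t - d) * σ + w`. The two terms on the left have
different valuations modulo `q`, so they cannot cancel, and a pole of `σ` or `w` at `v` would give
a pole of larger order on the left than on the right. Hence `σ` and `μ` have no poles at all, so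
they are constants, and a transcendental `t` leaves no room for a nontrivial relation `t * b = c`
with `b, c ∈ F`.

A pole-free function is constant because it is integral over both `F[s]` and `F[s⁻¹]`, for a
separating element `s`, so that the coefficients of its minimal polynomial over `F(s)` lie in
`F[s] ∩ F[s⁻¹] = F`.
-/

open IsDedekindDomain Polynomial WithZero
open scoped IntermediateField IntermediateField.algebraAdjoinAdjoin

theorem eq_exp_neg_one_of_pow_div_pow_eq {γ : ℤᵐ⁰} (hγ : γ ≤ 1) {m n : ℕ}
    (h : γ ^ m / γ ^ n = exp (-1)) : γ = exp (-1) := by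
  have hne : γ ≠ 0 := by
    rintro rfl
    simp only [zero_pow_eq] at h
    split_ifs at h <;> simpa using congrArg log h
  have hlog := congrArg log h
  rw [log_div (pow_ne_zero _ hne) (pow_ne_zero _ hne), log_pow, log_pow, log_exp, nsmul_eq_mul,
    nsmul_eq_mul] at hlog
  have hunit : IsUnit (log γ) := isUnit_of_dvd_one ⟨n - m, by linear_combination hlog⟩
  have hnonpos : log γ ≤ 0 := by rwa [log_le_iff_le_exp hne, exp_zero]
  rw [← exp_log hne]
  rcases Int.isUnit_iff.mp hunit with h | h <;> rw [h] at hnonpos ⊢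
  omega

theorem le_one_of_exp_neg_one_mul_pow_le {γ : ℤᵐ⁰} {q : ℕ} (hq : 3 ≤ q)
    (h : exp (-1) * γ ^ q ≤ γ) : γ ≤ 1 := by
  by_contra! hγ
  have hne : γ ≠ 0 := (zero_lt_one.trans hγ).ne'
  have hexp : exp 1 ≤ γ := (le_log_iff_exp_le hne).mp ((lt_log_iff_exp_lt hne).mpr hγ)
  refine h.not_gt ?_
  calc γ < γ ^ 2 := lt_self_pow₀ hγ one_lt_two
    _ = exp (-1) * (exp 1 * γ ^ 2) := by rw [← mul_assoc, ← exp_add]; simp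
    _ ≤ exp (-1) * γ ^ 3 := by rw [pow_succ' γ 2]; gcongr
    _ ≤ exp (-1) * γ ^ q := by gcongr; exact hγ.le

section Uniformizer

variable {K : Type*} [Field K] {v : Valuation K ℤᵐ⁰} {q : ℕ}

theorem valuation_uniformizer_mul_pow_add_pow {π : K} (hπ : v π = exp (-1)) (hq : 2 ≤ q)
    (x y : K) :
    v (π * x ^ q + y ^ q) = max (v (π * x ^ q)) (v (y ^ q)) := by
  rcases eq_or_ne x 0 with rfl | hx
  · simp [show q ≠ 0 by omega]
  refine v.map_add_of_distinct_val fun h ↦ ?_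
  have hlog := congrArg log h
  rw [map_mul, map_pow, map_pow, hπ, log_mul exp_ne_zero (by simp [hx]), log_exp, log_pow, log_pow,
    nsmul_eq_mul, nsmul_eq_mul] at hlog
  have hdvd : (q : ℤ) ∣ 1 := ⟨log (v x) - log (v y), by linear_combination -hlog⟩
  have := Int.le_of_dvd one_pos hdvd
  omega

theorem valuation_le_one_of_uniformizer_mul_pow_add_pow_le {π x y : K} (hπ : v π = exp (-1))
    (hq : 3 ≤ q) (h : v (π * x ^ q + y ^ q) ≤ max (v x) (v y)) : v x ≤ 1 ∧ v y ≤ 1 := by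
  rw [valuation_uniformizer_mul_pow_add_pow hπ (by omega), map_mul, map_pow, map_pow, hπ] at h
  rw [← max_le_iff]
  refine le_one_of_exp_neg_one_mul_pow_le hq (le_trans ?_ h)
  rcases max_choice (v x) (v y) with hmax | hmax <;> rw [hmax]
  · exact le_max_left _ _
  · exact le_max_of_le_right (mul_le_of_le_one_left' (by rw [← exp_zero, exp_le_exp]; omega))

theorem valuation_le_one_of_uniformizer_of_frobenius_eq {p a : ℕ} [ExpChar K p] (hq : 3 ≤ p ^ a)
    {t d x y : K} (hd : v d ≤ 1) (hπ : v (t - d ^ p ^ a) = exp (-1))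
    (heq : t * (x ^ p ^ a - x) = y ^ p ^ a - y) : v x ≤ 1 ∧ v y ≤ 1 := by
  set w := d * x - y with hw
  have ht : v t ≤ 1 := by
    rw [← sub_add_cancel t (d ^ p ^ a)]
    refine v.map_add_le ?_ (by rw [map_pow]; exact pow_le_one' hd _)
    rw [hπ, ← exp_zero, exp_le_exp]
    omega
  have hkey : (t - d ^ p ^ a) * x ^ p ^ a + w ^ p ^ a = (t - d) * x + w := by
    rw [hw, sub_pow_expChar_pow, mul_pow]
    linear_combination heq
  have hle : v ((t - d) * x + w) ≤ max (v x) (v w) := by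
    refine (v.map_add _ _).trans (max_le_max_right _ ?_)
    rw [map_mul]
    exact mul_le_of_le_one_left' (v.map_sub_le ht hd)
  obtain ⟨hx, hw'⟩ := valuation_le_one_of_uniformizer_mul_pow_add_pow_le hπ hq (hkey ▸ hle)
  refine ⟨hx, ?_⟩
  rw [← sub_sub_cancel (d * x) y]
  exact v.map_sub_le (by rw [map_mul]; exact mul_le_one' hd hx) hw'

end Uniformizer

section TrivialOnConstants

variable {F K Γ₀ : Type*} [Field F] [Field K] [Algebra F K] [LinearOrderedCommGroupWithZero Γ₀]

theorem valuation_aeval_mem_submonoid [IsAlgClosed F] {v : Valuation K Γ₀} [v.IsTrivialOn F] {t : K}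
    {S : Submonoid Γ₀} (hS : ∀ c : F, v (t - algebraMap F K c) ∈ S) {f : F[X]} (hf : f ≠ 0) :
    v (aeval t f) ∈ S := by
  rw [(IsAlgClosed.splits f).eq_prod_roots, map_mul, map_mul, aeval_C,
    Valuation.IsTrivialOn.eq_one _ (leadingCoeff_ne_zero.mpr hf), one_mul, map_multiset_prod,
    map_multiset_prod, Multiset.map_map, Multiset.map_map]
  refine S.multiset_prod_mem _ fun γ hγ ↦ ?_
  obtain ⟨c, -, rfl⟩ := Multiset.mem_map.mp hγ
  simpa using hS c

-- At most one constant has the same residue as `t`; for all other `c`, `t - c` is a unit.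
theorem exists_forall_valuation_sub_mem_powers {v : Valuation K Γ₀} [v.IsTrivialOn F] {t : K}
    (ht : v t ≤ 1) :
    ∃ c₀ : F, ∀ c : F, v (t - algebraMap F K c) ∈ Submonoid.powers (v (t - algebraMap F K c₀)) := by
  have hle (c : F) : v (t - algebraMap F K c) ≤ 1 :=
    v.map_sub_le ht (Valuation.IsTrivialOn.valuation_algebraMap_le_one v c)
  by_cases! h : ∃ c₀ : F, v (t - algebraMap F K c₀) ≠ 1
  · obtain ⟨c₀, hc₀⟩ := h
    refine ⟨c₀, fun c ↦ ?_⟩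
    rcases eq_or_ne c₀ c with rfl | hc
    · exact Submonoid.mem_powers _
    have hone : v (algebraMap F K (c₀ - c)) = 1 :=
      Valuation.IsTrivialOn.eq_one _ (sub_ne_zero.mpr hc)
    have hlt : v (t - algebraMap F K c₀) < v (algebraMap F K (c₀ - c)) :=
      hone ▸ (hle c₀).lt_of_ne hc₀
    have hunit : v (t - algebraMap F K c) = 1 := by
      rw [← sub_add_sub_cancel t (algebraMap F K c₀), ← map_sub, v.map_add_eq_of_lt_right hlt, hone]
    exact hunit ▸ one_mem _
  · exact ⟨0, fun c ↦ h c ▸ one_mem _⟩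

theorem exists_valuation_sub_eq_exp_neg_one [IsAlgClosed F] {v : Valuation K ℤᵐ⁰}
    [v.IsTrivialOn F] {t : K} (ht : v t ≤ 1) {r : K} (hr : r ∈ F⟮t⟯) (hvr : v r = exp (-1)) :
    ∃ c : F, v (t - algebraMap F K c) = exp (-1) := by
  obtain ⟨c, hc⟩ := exists_forall_valuation_sub_mem_powers (F := F) ht
  obtain ⟨f, g, rfl⟩ := (IntermediateField.mem_adjoin_simple_iff F r).mp hr
  have hne : aeval t f ≠ 0 ∧ aeval t g ≠ 0 := by
    rw [← div_ne_zero_iff, ← v.ne_zero_iff, hvr]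
    exact exp_ne_zero
  obtain ⟨m, hm⟩ := valuation_aeval_mem_submonoid hc (f := f) (by rintro rfl; simp at hne)
  obtain ⟨n, hn⟩ := valuation_aeval_mem_submonoid hc (f := g) (by rintro rfl; simp at hne)
  refine ⟨c, eq_exp_neg_one_of_pow_div_pow_eq
    (v.map_sub_le ht (Valuation.IsTrivialOn.valuation_algebraMap_le_one v c)) (m := m) (n := n) ?_⟩
  rw [← hvr, map_div₀, ← hm, ← hn]

end TrivialOnConstants

theorem adjoin_simple_inv {F K : Type*} [Field F] [Field K] [Algebra F K] (t : K) :
    F⟮t⁻¹⟯ = F⟮t⟯ := by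
  refine le_antisymm ?_ ?_ <;> rw [IntermediateField.adjoin_simple_le_iff]
  · exact inv_mem (IntermediateField.mem_adjoin_simple_self F t)
  · simpa using inv_mem (IntermediateField.mem_adjoin_simple_self F t⁻¹)

namespace FFPrime

variable {F M : Type*} [Field F] [Field M] [Algebra F M]

open scoped Classical in
/-- The prime `P` as a multiplicative valuation, `x ↦ exp (-P.v x)`; it sends `0` to `0`, whatever
the value of `P.v 0`. -/
noncomputable def valuation (P : FFPrime F M) : Valuation M ℤᵐ⁰ where
  toFun x := if x = 0 then 0 else exp (-P.v x)
  map_zero' := by simp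
  map_one' := by simpa using P.triv 1 one_ne_zero
  map_mul' x y := by
    rcases eq_or_ne x 0 with rfl | hx
    · simp
    rcases eq_or_ne y 0 with rfl | hy
    · simp
    simp only [hx, hy, mul_ne_zero hx hy, if_false, P.map_mul x y hx hy, neg_add, exp_add]
  map_add_le_max' x y := by
    rcases eq_or_ne x 0 with rfl | hx
    · simp
    rcases eq_or_ne y 0 with rfl | hy
    · simp
    rcases eq_or_ne (x + y) 0 with hxy | hxy
    · simp [hxy]
    have h := P.add_min x y hx hy hxy
    simp only [hx, hy, hxy, if_false, le_max_iff, exp_le_exp]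
    omega

theorem valuation_of_ne_zero (P : FFPrime F M) {x : M} (hx : x ≠ 0) :
    P.valuation x = exp (-P.v x) :=
  if_neg hx

instance (P : FFPrime F M) : P.valuation.IsTrivialOn F where
  eq_one c hc := by
    rw [P.valuation_of_ne_zero (by simpa), P.triv c hc, neg_zero, exp_zero]

theorem one_lt_valuation_iff {P : FFPrime F M} {x : M} :
    1 < P.valuation x ↔ x ≠ 0 ∧ P.v x < 0 := by
  rcases eq_or_ne x 0 with rfl | hx
  · simp
  · rw [P.valuation_of_ne_zero hx, ← exp_zero, exp_lt_exp]
    simp [hx]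

/-- The prime with a given multiplicative valuation. -/
def ofValuation (v : Valuation M ℤᵐ⁰) [v.IsTrivialOn F] (hv : Function.Surjective v) :
    FFPrime F M where
  v x := -log (v x)
  map_mul x y hx hy := by
    rw [_root_.map_mul, log_mul (by simpa) (by simpa), neg_add]
  add_min x y hx hy hxy := by
    have h := v.map_add x y
    rw [le_max_iff, ← log_le_log (by simpa) (by simpa), ← log_le_log (by simpa) (by simpa)] at h
    omega
  surj n := by
    obtain ⟨x, hx⟩ := hv (exp (-n))
    refine ⟨x, ?_, by rw [hx, log_exp, neg_neg]⟩
    rw [← v.ne_zero_iff, hx]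
    exact exp_ne_zero
  triv c hc := by rw [Valuation.IsTrivialOn.eq_one c hc, log_one, neg_zero]

theorem valuation_ofValuation (v : Valuation M ℤᵐ⁰) [v.IsTrivialOn F]
    (hv : Function.Surjective v) : (ofValuation (F := F) v hv).valuation = v := by
  ext x
  rcases eq_or_ne x 0 with rfl | hx
  · simp
  · rw [valuation_of_ne_zero _ hx]
    simp [ofValuation, hx]

theorem UnramifiedOver.inv {P : FFPrime F M} {t : M} (h : P.UnramifiedOver t) :
    P.UnramifiedOver t⁻¹ := by
  rwa [UnramifiedOver, adjoin_simple_inv]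

theorem UnramifiedOver.valuation_le_one_of_frobenius_eq [IsAlgClosed F] {P : FFPrime F M} {t : M}
    (hunr : P.UnramifiedOver t) {p a : ℕ} [ExpChar F p] (hq : 3 ≤ p ^ a) {x y : M}
    (heq : t * (x ^ p ^ a - x) = y ^ p ^ a - y) :
    P.valuation x ≤ 1 ∧ P.valuation y ≤ 1 := by
  wlog! ht : P.valuation t ≤ 1 generalizing t x y
  · have ht₀ : t ≠ 0 := by
      rintro rfl
      simp at ht
    refine (this hunr.inv ((inv_mul_eq_iff_eq_mul₀ ht₀).mpr heq.symm) ?_).symm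
    rw [map_inv₀]
    exact inv_le_one_of_one_le₀ ht.le
  have := expChar_of_injective_algebraMap (algebraMap F M).injective p
  obtain ⟨r, hr, hr₀, hvr⟩ := hunr
  obtain ⟨c, hc⟩ := exists_valuation_sub_eq_exp_neg_one ht hr
    (by rw [P.valuation_of_ne_zero hr₀, hvr])
  obtain ⟨d, rfl⟩ := IsAlgClosed.exists_pow_nat_eq c (show 0 < p ^ a by omega)
  rw [map_pow] at hc
  exact valuation_le_one_of_uniformizer_of_frobenius_eq hq
    (Valuation.IsTrivialOn.valuation_algebraMap_le_one _ d) hc heq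

end FFPrime

section Constants

variable {F M : Type*} [Field F] [Field M] [Algebra F M]

theorem isIntegral_of_forall_valuation_le_one {A K : Type*} [CommRing A] [IsDedekindDomain A]
    [Field K] [Algebra A K] [IsFractionRing A K] [Algebra F A] [Algebra A M] [Algebra K M]
    [IsScalarTower F A M] [IsScalarTower A K M] [FiniteDimensional K M] [Algebra.IsSeparable K M]
    {x : M} (hx : ∀ P : FFPrime F M, P.valuation x ≤ 1) : IsIntegral A x := by
  have : IsDedekindDomain (integralClosure A M) := integralClosure.isDedekindDomain A K M
  have : IsFractionRing (integralClosure A M) M :=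
    integralClosure.isFractionRing_of_finite_extension K M
  have hw (w : HeightOneSpectrum (integralClosure A M)) : w.valuation M x ≤ 1 := by
    have : (w.valuation M).IsTrivialOn F := .of_le_one _ fun c ↦ by
      rw [IsScalarTower.algebraMap_apply F (integralClosure A M) M]
      exact w.valuation_le_one _
    have := hx (.ofValuation (w.valuation M) (w.valuation_surjective M))
    rwa [FFPrime.valuation_ofValuation] at this
  obtain ⟨y, rfl⟩ := HeightOneSpectrum.mem_integers_of_valuation_le_one M x hw
  exact y.2

theorem isDedekindDomain_adjoin_of_transcendental {u : M} (hu : Transcendental F u) :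
    IsDedekindDomain (Algebra.adjoin F {u}) := by
  have : IsPrincipalIdealRing (Algebra.adjoin F {u}) :=
    .of_surjective (algEquivOfTranscendental F u hu) (AlgEquiv.surjective _)
  infer_instance

theorem coeff_minpoly_mem_adjoin {u : M} (hu : Transcendental F u) {K : IntermediateField F M}
    (hK : F⟮u⟯ = K) {x : M} (hx : IsIntegral (Algebra.adjoin F {u}) x) (i : ℕ) :
    ((minpoly K x).coeff i : M) ∈ Algebra.adjoin F {u} := by
  subst hK
  have := isDedekindDomain_adjoin_of_transcendental hu
  rw [minpoly.isIntegrallyClosed_eq_field_fractions' F⟮u⟯ hx, coeff_map]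
  exact ((minpoly (Algebra.adjoin F {u}) x).coeff i).2

theorem mem_range_algebraMap_of_mem_adjoin_of_mem_adjoin_inv {u : M} (hu : Transcendental F u)
    {x : M} (h₁ : x ∈ Algebra.adjoin F {u}) (h₂ : x ∈ Algebra.adjoin F {u⁻¹}) :
    x ∈ (algebraMap F M).range := by
  rw [Algebra.adjoin_singleton_eq_range_aeval] at h₁ h₂
  obtain ⟨f, rfl⟩ := h₁
  obtain ⟨g, hg : aeval u⁻¹ g = aeval u f⟩ := h₂
  have hu₀ : u ≠ 0 := fun h ↦ hu (h ▸ isAlgebraic_zero)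
  have hreverse : g.reverse = f * X ^ g.natDegree := by
    let := invertibleOfNonzero (inv_ne_zero hu₀)
    have h := eval₂_reverse_mul_pow (algebraMap F M) u⁻¹ g
    rw [invOf_eq_inv, inv_inv, ← aeval_def, ← aeval_def, hg] at h
    refine transcendental_iff_injective.mp hu ?_
    rw [map_mul, map_pow, aeval_X, ← h, mul_assoc, ← mul_pow, inv_mul_cancel₀ hu₀, one_pow, mul_one]
  have hdeg : f.natDegree = 0 := by
    rcases eq_or_ne f 0 with rfl | hf
    · exact natDegree_zero
    have := g.reverse_natDegree_le
    rw [hreverse, natDegree_mul_X_pow _ hf] at this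
    omega
  obtain ⟨c, rfl⟩ := natDegree_eq_zero.mp hdeg
  exact ⟨c, (aeval_C u c).symm⟩

theorem isAlgebraic_of_isIntegral_adjoin_of_isIntegral_adjoin_inv {u : M} (hu : Transcendental F u)
    {x : M} (h₁ : IsIntegral (Algebra.adjoin F {u}) x)
    (h₂ : IsIntegral (Algebra.adjoin F {u⁻¹}) x) : IsAlgebraic F x := by
  have hcoeff (i : ℕ) : (minpoly F⟮u⟯ x).coeff i ∈ Set.range (algebraMap F F⟮u⟯) := by
    obtain ⟨c, hc⟩ := mem_range_algebraMap_of_mem_adjoin_of_mem_adjoin_inv hu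
      (coeff_minpoly_mem_adjoin hu rfl h₁ i)
      (coeff_minpoly_mem_adjoin (mt IsAlgebraic.inv_iff.mp hu) (adjoin_simple_inv u) h₂ i)
    exact ⟨c, Subtype.ext hc⟩
  obtain ⟨f, hf : f.map _ = _⟩ := (lifts_iff_coeff_lifts _).mpr hcoeff
  refine ⟨f, ?_, ?_⟩
  · rintro rfl
    exact minpoly.ne_zero (h₁.tower_top (A := F⟮u⟯)) (by simpa using hf.symm)
  · rw [← aeval_map_algebraMap F⟮u⟯, hf, minpoly.aeval]

theorem exists_transcendental_finiteDimensional_isSeparable [PerfectField F] {t : M}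
    (ht : Transcendental F t) [FiniteDimensional F⟮t⟯ M] :
    ∃ s : M, Transcendental F s ∧ FiniteDimensional F⟮s⟯ M ∧ Algebra.IsSeparable F⟮s⟯ M := by
  have : Algebra.EssFiniteType F F⟮t⟯ := IntermediateField.essFiniteType_iff.mpr
    (IntermediateField.fg_adjoin_of_finite (Set.finite_singleton t))
  have : Algebra.EssFiniteType F M := .comp F F⟮t⟯ M
  have hbasis : IsTranscendenceBasis F (Subtype.val : ({t} : Set M) → M) := by
    have hind : AlgebraicIndependent F (Subtype.val : ({t} : Set M) → M) :=
      algebraicIndependent_unique_type_iff.mpr ht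
    rw [hind.isTranscendenceBasis_iff_isAlgebraic, Subtype.range_val]
    exact .trans _ F⟮t⟯ _
  obtain ⟨S, hS, hsep⟩ := exists_isTranscendenceBasis_and_isSeparable_of_perfectField F M
  have hcard := hbasis.cardinalMk_eq hS
  obtain ⟨s, rfl⟩ : ∃ s, S = {s} := by
    rw [← Finset.card_eq_one]
    simpa [eq_comm] using hcard
  rw [Finset.coe_singleton] at hsep
  refine ⟨s, ?_, ?_, hsep⟩
  · simpa using hS.1.transcendental ⟨s, by simp⟩
  · have : Algebra.EssFiniteType F⟮s⟯ M := .of_comp F _ _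
    exact Algebra.finite_of_essFiniteType_of_isAlgebraic

theorem mem_range_algebraMap_of_forall_valuation_le_one [IsAlgClosed F] {t : M}
    (ht : Transcendental F t) [FiniteDimensional F⟮t⟯ M] {x : M}
    (hx : ∀ P : FFPrime F M, P.valuation x ≤ 1) : x ∈ (algebraMap F M).range := by
  obtain ⟨s, hs, hfin, hsep⟩ := exists_transcendental_finiteDimensional_isSeparable ht
  have hint {u : M} (hu : Transcendental F u) (hus : F⟮u⟯ = F⟮s⟯) :
      IsIntegral (Algebra.adjoin F {u}) x := by
    have := isDedekindDomain_adjoin_of_transcendental hu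
    rw [← hus] at hfin hsep
    exact isIntegral_of_forall_valuation_le_one (K := F⟮u⟯) hx
  have halg : IsAlgebraic F x :=
    isAlgebraic_of_isIntegral_adjoin_of_isIntegral_adjoin_inv hs (hint hs rfl)
      (hint (mt IsAlgebraic.inv_iff.mp hs) (adjoin_simple_inv s))
  exact minpoly.mem_range_of_degree_eq_one F x
    (IsAlgClosed.degree_eq_one_of_irreducible F (minpoly.irreducible halg.isIntegral))

theorem eq_zero_of_transcendental_mul_eq {t : M} (ht : Transcendental F t) {b c : F}
    (h : t * algebraMap F M b = algebraMap F M c) : b = 0 ∧ c = 0 := by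
  have hb : b = 0 := by
    by_contra hb
    refine ht ?_
    rw [eq_div_of_mul_eq (by simpa) h, ← map_div₀]
    exact isAlgebraic_algebraMap _
  subst hb
  exact ⟨rfl, by simpa using h.symm⟩

end Constants

theorem stmt_14_general {F M : Type*} [Field F] [Field M] [Algebra F M] [IsAlgClosed F]
    {p a : ℕ} [ExpChar F p] (hq : 3 ≤ p ^ a) {t : M} (ht : Transcendental F t)
    [FiniteDimensional F⟮t⟯ M] {σ μ : M}
    (hram : ∀ P : FFPrime F M,
      (σ ≠ 0 ∧ P.v σ < 0) ∨ (μ ≠ 0 ∧ P.v μ < 0) → P.UnramifiedOver t)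
    (heq : t * (σ ^ p ^ a - σ) = μ ^ p ^ a - μ) :
    σ ^ p ^ a - σ = 0 ∧ μ ^ p ^ a - μ = 0 := by
  have hle (P : FFPrime F M) : P.valuation σ ≤ 1 ∧ P.valuation μ ≤ 1 := by
    by_contra! hpole
    have hunr : P.UnramifiedOver t := by
      refine hram P ?_
      simp only [← FFPrime.one_lt_valuation_iff]
      exact or_iff_not_imp_left.mpr fun h ↦ hpole (not_lt.mp h)
    obtain ⟨hσ, hμ⟩ := hunr.valuation_le_one_of_frobenius_eq hq heq
    exact (hpole hσ).not_ge hμ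
  obtain ⟨s, rfl⟩ := mem_range_algebraMap_of_forall_valuation_le_one ht fun P ↦ (hle P).1
  obtain ⟨m, rfl⟩ := mem_range_algebraMap_of_forall_valuation_le_one ht fun P ↦ (hle P).2
  simp only [← map_pow, ← map_sub] at heq ⊢
  obtain ⟨hs, hm⟩ := eq_zero_of_transcendental_mul_eq ht heq
  rw [hs, hm, map_zero, and_self]

/-- Let `F` be algebraically closed of characteristic `p > 0`, with `a = 1` if `p > 2`
and `a = 2` if `p = 2`. Let `M` be a function field over `F` and `t ∈ M` transcendental
with `M/F(t)` finite separable and all zeros and poles of `t` simple. Let `σ, μ ∈ M` be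
such that every prime at which `σ` or `μ` has a pole is unramified over `F(t)`. If
`t·(σ^{p^a} - σ) = μ^{p^a} - μ`, then `σ^{p^a} - σ = 0` and `μ^{p^a} - μ = 0`. -/
theorem stmt_14 {F M : Type*} [Field F] [Field M] [Algebra F M] [IsAlgClosed F]
    (p : ℕ) (hp : p.Prime) [CharP F p]
    (a : ℕ) (ha : (2 < p ∧ a = 1) ∨ (p = 2 ∧ a = 2))
    (t : M) (htrans : Transcendental F t)
    (hfin : FiniteDimensional (IntermediateField.adjoin F {t}) M)
    (hsep : Algebra.IsSeparable (IntermediateField.adjoin F {t}) M)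
    (hsimple : ∀ P : FFPrime F M, P.v t ∈ ({-1, 0, 1} : Set ℤ))
    (σ μ : M)
    (hram : ∀ P : FFPrime F M,
      (σ ≠ 0 ∧ P.v σ < 0) ∨ (μ ≠ 0 ∧ P.v μ < 0) → P.UnramifiedOver t)
    (heq : t * (σ ^ p ^ a - σ) = μ ^ p ^ a - μ) :
    σ ^ p ^ a - σ = 0 ∧ μ ^ p ^ a - μ = 0 := by
  have : ExpChar F p := .prime hp
  exact stmt_14_general (by rcases ha with ⟨h, rfl⟩ | ⟨rfl, rfl⟩ <;> grind) htrans hram heq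
end
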